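/- Let ρ̂ : {−2B,…,2B} → ℂ and let V_opt ∈ ℂ^{Q×n} be the matrix all of whose Q rows are equal to v_opt. Then for every V ∈ ℂ^{Q×n}, ‖𝒯_ρ − BC(V_opt)‖_F² ≤ ‖𝒯_ρ − BC(V)‖_F², and the minimal value is ‖𝒯_ρ − BC(V_opt)‖_F² = Q²·S_B(ρ̂). -/

import Mathlib

open Complex ComplexConjugate

/-- `v_opt[k] = (k·ρ̂[-(n-k)] + (n-k)·ρ̂[k]) / n`, `n = 2B+1`. -/
noncomputable def vopt (B : ℕ) (rhohat : ℤ → ℂ) : Fin (2 * B + 1) → ℂ :=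
  fun k => ((((k : ℕ) : ℤ) : ℂ) * rhohat (-((2 * B + 1 : ℤ) - ((k : ℕ) : ℤ))) +
      (((2 * B + 1 : ℤ) - ((k : ℕ) : ℤ) : ℤ) : ℂ) * rhohat ((k : ℕ) : ℤ)) /
    ((2 * B + 1 : ℕ) : ℂ)

/-- `S_B(ρ̂) = Σ_{k=1}^{n-1} |ρ̂[k] - ρ̂[-(n-k)]|² · k(n-k)/n`, `n = 2B+1`. -/
noncomputable def SB (B : ℕ) (rhohat : ℤ → ℂ) : ℝ :=
  ∑ k ∈ Finset.Icc (1 : ℤ) (2 * B : ℤ),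
    ‖rhohat k - rhohat (-((2 * B + 1 : ℤ) - k))‖ ^ 2 *
      ((k * ((2 * B + 1 : ℤ) - k) : ℤ) : ℝ) / ((2 * B + 1 : ℕ) : ℝ)

/-- The block matrix `𝒯_ρ[(k₁,q₁),(k₂,q₂)] = ρ̂[k₁ - k₂]`, with the `k`-index represented by
`i : Fin (2B+1)` via `k = i - B`, and the `q`-index by `Fin Q`. -/
noncomputable def Tmat2 (B Q : ℕ) (rhohat : ℤ → ℂ) :
    Matrix (Fin (2 * B + 1) × Fin Q) (Fin (2 * B + 1) × Fin Q) ℂ :=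
  Matrix.of fun p₁ p₂ => rhohat (((p₁.1 : ℕ) : ℤ) - ((p₂.1 : ℕ) : ℤ))

/-- The block-circulant matrix `BC(V)[(k₁,q₁),(k₂,q₂)] = V[(q₁-q₂) mod Q, (k₁-k₂) mod n]`. -/
noncomputable def BCmat (B Q : ℕ) (V : Matrix (Fin Q) (Fin (2 * B + 1)) ℂ) :
    Matrix (Fin (2 * B + 1) × Fin Q) (Fin (2 * B + 1) × Fin Q) ℂ :=
  Matrix.of fun p₁ p₂ => V (p₁.2 - p₂.2) (p₁.1 - p₂.1)

/-- The matrix `V_opt ∈ ℂ^{Q×n}`, all of whose `Q` rows equal `v_opt`. -/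
noncomputable def Vopt (B Q : ℕ) (rhohat : ℤ → ℂ) : Matrix (Fin Q) (Fin (2 * B + 1)) ℂ :=
  Matrix.of fun _ j => vopt B rhohat j

/-- The squared Frobenius norm of a complex matrix. -/
noncomputable def frobSq {m : Type*} [Fintype m] (A : Matrix m m ℂ) : ℝ :=
  ∑ i, ∑ j, ‖A i j‖ ^ 2

/-!
`BC(V)` is constant, with value `V[q, d]`, on the positions whose block difference is `q` modulo `Q`
and whose frequency difference is `d` modulo `n = 2B+1`. On these `Q·n` positions `𝒯_ρ` takes only
two values: `ρ̂[d]`, at `Q(n-d)` of them, and `ρ̂[d-n]`, at the other `Q·d`. Thus each entry of `V`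
is fitted separately to two weighted points, and the best fit is their weighted mean `v_opt[d]`.
Quantitatively, the parallel axis identity gives

  `‖𝒯_ρ - BC(V)‖_F² = Q·n·∑ ‖V[q, d] - v_opt[d]‖² + Q²·S_B(ρ̂)`.
-/

section ParallelAxis

variable {E : Type*} [NormedAddCommGroup E] [InnerProductSpace ℝ E]

lemma weighted_norm_sub_sq_add_eq_parallel_axis {w₁ w₂ : ℝ} (hw : w₁ + w₂ ≠ 0) (a b v : E) :
    w₁ * ‖a - v‖ ^ 2 + w₂ * ‖b - v‖ ^ 2 =
      (w₁ + w₂) * ‖v - (w₁ + w₂)⁻¹ • (w₁ • a + w₂ • b)‖ ^ 2 +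
        ‖a - b‖ ^ 2 * (w₁ * w₂) / (w₁ + w₂) := by
  have hmean : v - (w₁ + w₂)⁻¹ • (w₁ • a + w₂ • b) =
      -((w₁ + w₂)⁻¹ • (w₁ • (a - v) + w₂ • (b - v))) := by
    match_scalars <;> field_simp
    ring
  have hcomb : ‖w₁ • (a - v) + w₂ • (b - v)‖ ^ 2 =
      w₁ ^ 2 * ‖a - v‖ ^ 2 + 2 * (w₁ * (w₂ * inner ℝ (a - v) (b - v))) +
        w₂ ^ 2 * ‖b - v‖ ^ 2 := by
    rw [norm_add_sq_real, real_inner_smul_left, real_inner_smul_right]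
    simp only [norm_smul, mul_pow, Real.norm_eq_abs, sq_abs]
  rw [hmean, norm_neg, norm_smul, mul_pow, hcomb, ← sub_sub_sub_cancel_right a b v,
    norm_sub_sq_real (a - v), Real.norm_eq_abs, sq_abs]
  field_simp
  ring

end ParallelAxis

section CyclicSums

open Finset

variable {M : Type*} [AddCommMonoid M]

lemma sum_fin_cyclic_diagonal {n : ℕ} (d : Fin n) (f : ℤ → M) :
    ∑ j : Fin n, f (((d + j : Fin n) : ℤ) - j) = (n - d : ℕ) • f d + (d : ℕ) • f (d - n) := by
  have hwrap (j : Fin n) :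
      f (((d + j : Fin n) : ℤ) - j) = if (j : ℕ) < n - d then f d else f (d - n) := by
    rw [Fin.coe_int_add_eq_ite]
    split_ifs <;> first | omega | (congr 1; omega)
  have hcard : #{j : Fin n | (j : ℕ) < n - d} = n - d := by
    rw [Fin.card_filter_val_lt, min_eq_right (Nat.sub_le _ _)]
  have hcard_compl : #{j : Fin n | ¬ (j : ℕ) < n - d} = d := by
    rw [← compl_filter, card_compl, hcard, Fintype.card_fin, Nat.sub_sub_self d.is_le']
  simp only [hwrap, sum_ite, sum_const, hcard, hcard_compl]

lemma sum_sum_eq_sum_sum_add_right {G : Type*} [AddGroup G] [Fintype G] (f : G → G → M) :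
    ∑ x, ∑ y, f x y = ∑ s, ∑ y, f (s + y) y := by
  calc ∑ x, ∑ y, f x y = ∑ y, ∑ x, f x y := sum_comm
    _ = ∑ y, ∑ s, f (s + y) y :=
      sum_congr rfl fun y _ ↦ (Equiv.sum_comp (Equiv.addRight y) (f · y)).symm
    _ = ∑ s, ∑ y, f (s + y) y := sum_comm

lemma sum_sum_fin_prod_eq_sum_cyclic_diagonals {n : ℕ} [NeZero n]
    {G : Type*} [AddGroup G] [Fintype G] (f : ℤ → Fin n → G → M) :
    ∑ x : Fin n × G, ∑ y : Fin n × G, f ((x.1 : ℤ) - y.1) (x.1 - y.1) (x.2 - y.2) =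
      Fintype.card G • ∑ q, ∑ d : Fin n, ((n - d : ℕ) • f d d q + (d : ℕ) • f (d - n) d q) := by
  rw [sum_sum_eq_sum_sum_add_right, Fintype.sum_prod_type_right]
  simp only [smul_sum, Prod.fst_add, Prod.snd_add, add_sub_cancel_right]
  refine sum_congr rfl fun q _ ↦ sum_congr rfl fun d _ ↦ ?_
  simp only [Fintype.sum_prod_type_right, sum_fin_cyclic_diagonal d (f · d q), sum_const, card_univ]

lemma sum_int_Icc_one_eq_sum_fin {m : ℕ} {f : ℤ → M} (hf : f 0 = 0) :
    ∑ k ∈ Icc (1 : ℤ) m, f k = ∑ d : Fin (m + 1), f d := by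
  calc ∑ k ∈ Icc (1 : ℤ) m, f k = ∑ i : Fin m, f (i.succ : ℕ) := by
        refine (sum_bij (fun i _ ↦ ((i.succ : ℕ) : ℤ)) ?_ ?_ ?_ fun _ _ ↦ rfl).symm
        · grind
        · grind
        · intro k hk
          exact ⟨⟨(k - 1).toNat, by grind⟩, mem_univ _, by grind⟩
    _ = ∑ d : Fin (m + 1), f d := by
        rw [Fin.sum_univ_succ, Fin.val_zero, Nat.cast_zero, hf, zero_add]

end CyclicSums

section Circulant

variable (B : ℕ) (rhohat : ℤ → ℂ)

lemma vopt_eq_smul (d : Fin (2 * B + 1)) :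
    vopt B rhohat d = ((2 * B + 1 : ℕ) : ℝ)⁻¹ •
      (((2 * B + 1 - d : ℕ) : ℝ) • rhohat d + (d : ℝ) • rhohat (d - (2 * B + 1 : ℕ))) := by
  simp only [vopt, neg_sub, Complex.real_smul, Nat.cast_sub d.is_le']
  push_cast
  ring

lemma SB_eq_sum_fin :
    SB B rhohat = ∑ d : Fin (2 * B + 1), ‖rhohat d - rhohat (d - (2 * B + 1 : ℕ))‖ ^ 2 *
      (((2 * B + 1 - d : ℕ) : ℝ) * d) / (2 * B + 1 : ℕ) := by
  have hcast : (2 * B : ℤ) = (2 * B : ℕ) := by norm_cast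
  rw [SB, hcast, sum_int_Icc_one_eq_sum_fin (by simp)]
  refine Finset.sum_congr rfl fun d _ ↦ ?_
  rw [Nat.cast_sub d.is_le', neg_sub]
  push_cast
  ring

lemma parallel_axis_vopt (d : Fin (2 * B + 1)) (z : ℂ) :
    ((2 * B + 1 - d : ℕ) : ℝ) * ‖rhohat d - z‖ ^ 2 +
        (d : ℝ) * ‖rhohat (d - (2 * B + 1 : ℕ)) - z‖ ^ 2 =
      (2 * B + 1 : ℕ) * ‖z - vopt B rhohat d‖ ^ 2 +
        ‖rhohat d - rhohat (d - (2 * B + 1 : ℕ))‖ ^ 2 *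
          (((2 * B + 1 - d : ℕ) : ℝ) * d) / (2 * B + 1 : ℕ) := by
  have hweights : ((2 * B + 1 - d : ℕ) : ℝ) + (d : ℝ) = (2 * B + 1 : ℕ) := by
    rw [← Nat.cast_add, Nat.sub_add_cancel d.is_le']
  have hweights_ne : ((2 * B + 1 - d : ℕ) : ℝ) + (d : ℝ) ≠ 0 := by
    rw [hweights]
    positivity
  rw [weighted_norm_sub_sq_add_eq_parallel_axis hweights_ne, hweights, vopt_eq_smul]

variable {Q : ℕ} [NeZero Q] (V : Matrix (Fin Q) (Fin (2 * B + 1)) ℂ)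

lemma frobSq_Tmat2_sub_BCmat_eq_sum :
    frobSq (Tmat2 B Q rhohat - BCmat B Q V) =
      Q * ∑ q, ∑ d : Fin (2 * B + 1), (((2 * B + 1 - d : ℕ) : ℝ) * ‖rhohat d - V q d‖ ^ 2 +
        (d : ℝ) * ‖rhohat (d - (2 * B + 1 : ℕ)) - V q d‖ ^ 2) := by
  simpa only [nsmul_eq_mul, Fintype.card_fin, frobSq, Tmat2, BCmat, Matrix.sub_apply,
    Matrix.of_apply] using
    sum_sum_fin_prod_eq_sum_cyclic_diagonals fun k (d : Fin (2 * B + 1)) q ↦ ‖rhohat k - V q d‖ ^ 2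

lemma frobSq_Tmat2_sub_BCmat :
    frobSq (Tmat2 B Q rhohat - BCmat B Q V) =
      Q * (2 * B + 1 : ℕ) * ∑ q, ∑ d, ‖V q d - vopt B rhohat d‖ ^ 2 +
        (Q : ℝ) ^ 2 * SB B rhohat := by
  simp only [frobSq_Tmat2_sub_BCmat_eq_sum, parallel_axis_vopt, Finset.sum_add_distrib,
    ← SB_eq_sum_fin, ← Finset.mul_sum, Finset.sum_const, Finset.card_univ, Fintype.card_fin,
    nsmul_eq_mul]
  ring

lemma frobSq_Tmat2_sub_BCmat_Vopt :
    frobSq (Tmat2 B Q rhohat - BCmat B Q (Vopt B Q rhohat)) = (Q : ℝ) ^ 2 * SB B rhohat := by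
  simp [frobSq_Tmat2_sub_BCmat, Vopt]

end Circulant

/-- `BC(V_opt)` is the closest block-circulant matrix to `𝒯_ρ` in the
Frobenius norm, and the minimal squared distance equals `Q²·S_B(ρ̂)`. -/
theorem stmt_10 (B Q : ℕ) (hB : 1 ≤ B) (hQ : 1 ≤ Q) (rhohat : ℤ → ℂ) :
    (∀ V : Matrix (Fin Q) (Fin (2 * B + 1)) ℂ,
      frobSq (Tmat2 B Q rhohat - BCmat B Q (Vopt B Q rhohat)) ≤
        frobSq (Tmat2 B Q rhohat - BCmat B Q V)) ∧
    frobSq (Tmat2 B Q rhohat - BCmat B Q (Vopt B Q rhohat)) = (Q : ℝ) ^ 2 * SB B rhohat := by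
  have : NeZero Q := ⟨by omega⟩
  refine ⟨fun V ↦ ?_, frobSq_Tmat2_sub_BCmat_Vopt B rhohat⟩
  rw [frobSq_Tmat2_sub_BCmat_Vopt, frobSq_Tmat2_sub_BCmat]
  exact le_add_of_nonneg_left (by positivity)
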